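/- Fix real numbers q > 0 and r > 1. With P₁₂(n) = √(n⁴π⁴ + q/nʳ) − n²π², P₂₂(n) = √(q/nʳ + 2P₁₂(n)) and P₁₁(n) = (n²π² + P₁₂(n))P₂₂(n), there exists a constant C > 0 such that 0 < P₁₁(n) ≤ C · n^{2−r/2} for every integer n ≥ 1. -/

import Mathlib

/-- `P₁₂(n)` in the Neumann boundary control example. -/
noncomputable def neuP12 (q r : ℝ) (n : ℕ) : ℝ :=
  Real.sqrt ((n : ℝ) ^ 4 * Real.pi ^ 4 + q / (n : ℝ) ^ r) - (n : ℝ) ^ 2 * Real.pi ^ 2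

/-- `P₂₂(n)` in the Neumann boundary control example. -/
noncomputable def neuP22 (q r : ℝ) (n : ℕ) : ℝ :=
  Real.sqrt (q / (n : ℝ) ^ r + 2 * neuP12 q r n)

/-- `P₁₁(n)` in the Neumann boundary control example. -/
noncomputable def neuP11 (q r : ℝ) (n : ℕ) : ℝ :=
  ((n : ℝ) ^ 2 * Real.pi ^ 2 + neuP12 q r n) * neuP22 q r n

/-!
Since `n²π² + P₁₂(n) = √(n⁴π⁴ + q/nʳ)`, we have `P₁₁(n) = √(n⁴π⁴ + q/nʳ) · P₂₂(n)`. The first factor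
is `O(n²)` as soon as the weight `q/nʳ` is `O(n⁴)`, that is, `-4 ≤ r`. For the second,
`√(a² + e) - a ≤ e/(2a)` with `a = n²π²` and `e = q/nʳ` gives `2 P₁₂(n) ≤ q/nʳ`, so that `P₂₂(n)` is
`O(n^{-r/2})`.
-/

theorem sqrt_sq_add_sub_le {a e : ℝ} (ha : 0 < a) (hae : 0 ≤ a ^ 2 + e) :
    √(a ^ 2 + e) - a ≤ e / (2 * a) := by
  rw [le_div_iff₀ (by positivity)]
  linarith [sq_nonneg (√(a ^ 2 + e) - a), Real.sq_sqrt hae]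

theorem sqrt_div_rpow {x : ℝ} (hx : 0 ≤ x) (c s : ℝ) : √(c / x ^ s) = √c * x ^ (-s / 2) := by
  rw [div_eq_mul_inv, ← Real.rpow_neg hx, Real.sqrt_mul' c (Real.rpow_nonneg hx _),
    Real.sqrt_eq_rpow (x ^ (-s)), ← Real.rpow_mul hx, mul_one_div]

section Modes

open Real

variable {q r : ℝ} {n : ℕ}

theorem neuP12_eq_sqrt_sq_add_sub (q r : ℝ) (n : ℕ) :
    neuP12 q r n = √((n ^ 2 * π ^ 2) ^ 2 + q / n ^ r) - n ^ 2 * π ^ 2 := by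
  rw [neuP12]
  ring_nf

theorem neuP12_pos (hq : 0 < q) (hn : 0 < n) : 0 < neuP12 q r n := by
  rw [neuP12_eq_sqrt_sq_add_sub, sub_pos]
  exact lt_sqrt_of_sq_lt (lt_add_of_pos_right _ (by positivity))

theorem neuP12_le (hq : 0 ≤ q) (hn : 0 < n) :
    neuP12 q r n ≤ q / n ^ r / (2 * (n ^ 2 * π ^ 2)) := by
  rw [neuP12_eq_sqrt_sq_add_sub]
  exact sqrt_sq_add_sub_le (by positivity) (by positivity)

theorem neuP22_pos (hq : 0 < q) (hn : 0 < n) : 0 < neuP22 q r n := by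
  have hP12 : 0 < neuP12 q r n := neuP12_pos hq hn
  rw [neuP22]
  positivity

theorem neuP22_le (hq : 0 ≤ q) (hn : 0 < n) :
    neuP22 q r n ≤ √(2 * q) * n ^ (-r / 2) := by
  have hfreq : (1 : ℝ) ≤ n ^ 2 * π ^ 2 :=
    one_le_mul_of_one_le_of_one_le (one_le_pow₀ (mod_cast hn))
      (one_le_pow₀ (by linarith [pi_gt_three]))
  have hP12 : 2 * neuP12 q r n ≤ q / n ^ r :=
    calc 2 * neuP12 q r n ≤ 2 * (q / n ^ r / (2 * (n ^ 2 * π ^ 2))) := by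
          gcongr
          exact neuP12_le hq hn
      _ = q / n ^ r / (n ^ 2 * π ^ 2) := by ring
      _ ≤ q / n ^ r := div_le_self (by positivity) hfreq
  calc neuP22 q r n ≤ √(2 * q / n ^ r) :=
        sqrt_le_sqrt (by linarith [mul_div_assoc 2 q ((n : ℝ) ^ r)])
    _ = √(2 * q) * n ^ (-r / 2) := sqrt_div_rpow n.cast_nonneg _ _

theorem neuP11_eq_sqrt_mul_neuP22 (q r : ℝ) (n : ℕ) :
    neuP11 q r n = √(n ^ 4 * π ^ 4 + q / n ^ r) * neuP22 q r n := by
  rw [neuP11, neuP12, add_sub_cancel]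

theorem neuP11_pos (hq : 0 < q) (hn : 0 < n) : 0 < neuP11 q r n := by
  have hP22 : 0 < neuP22 q r n := neuP22_pos hq hn
  rw [neuP11_eq_sqrt_mul_neuP22]
  positivity

theorem sqrt_pow_four_mul_pi_pow_four_add_le (hq : 0 ≤ q) (hr : -4 ≤ r) (hn : 0 < n) :
    √(n ^ 4 * π ^ 4 + q / n ^ r) ≤ n ^ 2 * √(π ^ 4 + q) := by
  have hweight : q / (n : ℝ) ^ r ≤ q * n ^ 4 := by
    rw [div_eq_mul_inv, ← rpow_neg n.cast_nonneg, ← rpow_natCast]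
    gcongr
    · exact_mod_cast hn
    · norm_num
      linarith
  calc √(n ^ 4 * π ^ 4 + q / n ^ r) ≤ √((n ^ 2) ^ 2 * (π ^ 4 + q)) :=
        sqrt_le_sqrt (by linarith)
    _ = n ^ 2 * √(π ^ 4 + q) := by
        rw [sqrt_mul (by positivity), sqrt_sq (by positivity)]

theorem neuP11_le (hq : 0 ≤ q) (hr : -4 ≤ r) (hn : 0 < n) :
    neuP11 q r n ≤ √(π ^ 4 + q) * √(2 * q) * n ^ (2 - r / 2) :=
  calc neuP11 q r n = √(n ^ 4 * π ^ 4 + q / n ^ r) * neuP22 q r n :=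
        neuP11_eq_sqrt_mul_neuP22 q r n
    _ ≤ (n ^ 2 * √(π ^ 4 + q)) * (√(2 * q) * n ^ (-r / 2)) :=
        mul_le_mul (sqrt_pow_four_mul_pi_pow_four_add_le hq hr hn) (neuP22_le hq hn)
          (sqrt_nonneg _) (by positivity)
    _ = √(π ^ 4 + q) * √(2 * q) * (n ^ (2 : ℝ) * n ^ (-r / 2)) := by
        rw [rpow_two]
        ring
    _ = √(π ^ 4 + q) * √(2 * q) * n ^ (2 - r / 2) := by
        rw [← rpow_add (mod_cast hn), neg_div, ← sub_eq_add_neg]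

end Modes

theorem neumann_example_P11_bound_general (q : ℝ) (hq : 0 < q) :
    ∃ C : ℝ, 0 < C ∧ ∀ r : ℝ, -4 ≤ r → ∀ n : ℕ, 1 ≤ n →
      0 < neuP11 q r n ∧ neuP11 q r n ≤ C * (n : ℝ) ^ ((2 : ℝ) - r / 2) :=
  ⟨√(Real.pi ^ 4 + q) * √(2 * q), by positivity, fun _ hr _ hn =>
    ⟨neuP11_pos hq hn, neuP11_le hq.le hr hn⟩⟩

/-- In the Neumann example there is a constant `C > 0` such that
`0 < P₁₁(n) ≤ C · n^{2−r/2}` for every `n ≥ 1`. -/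
theorem neumann_example_P11_bound (q r : ℝ) (hq : 0 < q) (hr : 1 < r) :
    ∃ C : ℝ, 0 < C ∧ ∀ n : ℕ, 1 ≤ n →
      0 < neuP11 q r n ∧ neuP11 q r n ≤ C * (n : ℝ) ^ ((2 : ℝ) - r / 2) := by
  obtain ⟨C, hC, hbound⟩ := neumann_example_P11_bound_general q hq
  exact ⟨C, hC, hbound r (by linarith)⟩
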